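/- Let k ≥ 2 and let Φ be a CNF propositional formula each of whose clauses has one of the forms ¬v, ¬v ∨ w, or w_1 ∨ … ∨ w_k (where the positive literals w_1,…,w_k are not necessarily distinct). If Φ is unsatisfiable, then Φ contains a clause of the form w_1 ∨ … ∨ w_k such that for each i ∈ {1,…,k} there exists a finite sequence of variables w_i = v^i_1, v^i_2, …, v^i_{l_i} with the property that the clause ¬v^i_{l_i} belongs to Φ and, for every j ∈ {1,…,l_i−1}, the clause ¬v^i_j ∨ v^i_{j+1} belongs to Φ. -/

import Mathlib

/-- Clauses of the forms `¬v`, `¬v ∨ w`, or `w_1 ∨ … ∨ w_k` (the positive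
literals not necessarily distinct), over propositional variables from `V`. -/
inductive HClause (V : Type) (k : ℕ) where
  | negUnit (v : V)
  | impl (v w : V)
  | posK (w : Fin k → V)

/-- Satisfaction of such a clause by an assignment `t : V → Bool`. -/
def HClause.Holds {V : Type} {k : ℕ} (t : V → Bool) : HClause V k → Prop
  | .negUnit v => t v = false
  | .impl v w => t v = false ∨ t w = true
  | .posK w => ∃ m, t (w m) = true

/-! Setting every variable from which a chain of implications in `Φ` leads to some `v` with
`¬v ∈ Φ` to false, and all others to true, satisfies every clause `¬v` and `¬v ∨ w` of `Φ`. If `Φ`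
is unsatisfiable, it must therefore contain a clause `w_1 ∨ … ∨ w_k` violated by this assignment,
and the violation says exactly that each `w_i` starts such a chain. -/

namespace HClause

variable {V : Type} {k : ℕ} {Φ : Set (HClause V k)} {v w : V}

/-- The implication digraph of `Φ`: there is an edge from `v` to `w` when the clause `¬v ∨ w`
belongs to `Φ`. It is a `SetRel` so that its directed walks are Mathlib's `RelSeries`. -/
def implRel (Φ : Set (HClause V k)) : SetRel V V :=
  {e | impl e.1 e.2 ∈ Φ}

/-- A variable is refuted by `Φ` when some (possibly trivial) walk in the implication digraph leads
from it to a variable `v` with `¬v ∈ Φ`, so that unit propagation forces it to be false. -/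
def IsRefuted (Φ : Set (HClause V k)) (v : V) : Prop :=
  ∃ p : RelSeries (implRel Φ), p.head = v ∧ negUnit p.last ∈ Φ

theorem IsRefuted.of_negUnit_mem (hv : negUnit v ∈ Φ) : IsRefuted Φ v :=
  ⟨.singleton _ v, rfl, hv⟩

theorem IsRefuted.of_impl_mem (hvw : impl v w ∈ Φ) (hw : IsRefuted Φ w) : IsRefuted Φ v := by
  obtain ⟨p, rfl, hlast⟩ := hw
  exact ⟨p.cons v hvw, p.head_cons v hvw, (p.last_cons v hvw).symm ▸ hlast⟩

open Classical in
/-- The pointwise largest candidate for a satisfying assignment of `Φ`: a variable is false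
precisely when it is refuted. -/
noncomputable def maxAssignment (Φ : Set (HClause V k)) (v : V) : Bool :=
  decide (¬ IsRefuted Φ v)

theorem maxAssignment_eq_true_iff : maxAssignment Φ v = true ↔ ¬ IsRefuted Φ v := by
  simp [maxAssignment]

theorem maxAssignment_eq_false_iff : maxAssignment Φ v = false ↔ IsRefuted Φ v := by
  simp [maxAssignment]

theorem holds_maxAssignment_negUnit (hv : negUnit v ∈ Φ) :
    (negUnit v : HClause V k).Holds (maxAssignment Φ) :=
  maxAssignment_eq_false_iff.2 (.of_negUnit_mem hv)

theorem holds_maxAssignment_impl (hvw : impl v w ∈ Φ) :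
    (impl v w : HClause V k).Holds (maxAssignment Φ) := by
  simp only [Holds, maxAssignment_eq_false_iff, maxAssignment_eq_true_iff]
  exact or_not_of_imp (.of_impl_mem hvw)

theorem not_holds_maxAssignment_posK_iff {w : Fin k → V} :
    ¬ (posK w).Holds (maxAssignment Φ) ↔ ∀ i, IsRefuted Φ (w i) := by
  simp only [Holds, maxAssignment_eq_true_iff, not_exists, not_not]

theorem exists_posK_mem_forall_isRefuted (hunsat : ∀ t : V → Bool, ∃ c ∈ Φ, ¬ Holds t c) :
    ∃ w : Fin k → V, posK w ∈ Φ ∧ ∀ i, IsRefuted Φ (w i) := by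
  obtain ⟨c, hc, hviolated⟩ := hunsat (maxAssignment Φ)
  cases c with
  | negUnit v => exact absurd (holds_maxAssignment_negUnit hc) hviolated
  | impl v w => exact absurd (holds_maxAssignment_impl hc) hviolated
  | posK w => exact ⟨w, hc, not_holds_maxAssignment_posK_iff.1 hviolated⟩

end HClause

theorem stmt11_general {V : Type} {k : ℕ} {Φ : Set (HClause V k)}
    (hunsat : ∀ t : V → Bool, ∃ c ∈ Φ, ¬ HClause.Holds t c) :
    ∃ w : Fin k → V, HClause.posK w ∈ Φ ∧
      ∀ i : Fin k, ∃ (l : ℕ) (v : Fin (l + 1) → V),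
        v 0 = w i ∧
        HClause.negUnit (v (Fin.last l)) ∈ Φ ∧
        ∀ j : Fin l, HClause.impl (v j.castSucc) (v j.succ) ∈ Φ := by
  obtain ⟨w, hw, hrefuted⟩ := HClause.exists_posK_mem_forall_isRefuted hunsat
  refine ⟨w, hw, fun i ↦ ?_⟩
  obtain ⟨p, hhead, hlast⟩ := hrefuted i
  exact ⟨p.length, p, hhead, hlast, p.step⟩

/-- if a finite CNF `Φ` whose clauses all have one of the forms
`¬v`, `¬v ∨ w`, `w_1 ∨ … ∨ w_k` (with `k ≥ 2`) is unsatisfiable, then `Φ`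
contains a clause `w_1 ∨ … ∨ w_k` such that for each `i` there is a chain of
variables `w_i = v^i_1, …, v^i_{l_i}` with `¬v^i_{l_i} ∈ Φ` and
`¬v^i_j ∨ v^i_{j+1} ∈ Φ` for every `j < l_i`. -/
theorem stmt11 {V : Type} (k : ℕ) (hk : 2 ≤ k) (Φ : Set (HClause V k))
    (hfin : Φ.Finite)
    (hunsat : ∀ t : V → Bool, ∃ c ∈ Φ, ¬ HClause.Holds t c) :
    ∃ w : Fin k → V, HClause.posK w ∈ Φ ∧
      ∀ i : Fin k, ∃ (l : ℕ) (v : Fin (l + 1) → V),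
        v 0 = w i ∧
        HClause.negUnit (v (Fin.last l)) ∈ Φ ∧
        ∀ j : Fin l, HClause.impl (v j.castSucc) (v j.succ) ∈ Φ :=
  stmt11_general hunsat
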